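/- Let C be a nonempty closed convex subset of a real Hilbert space H and T a metrically nonspreading mapping of C into itself (with the metric induced by the norm). Then T has a fixed point if and only if the orbit {Tⁿx : n ∈ ℕ} is bounded for some x ∈ C. -/

import Mathlib

/-!
For a bounded sequence `x`, consider the functional `f y = limsup (dist (x n) y ^ 2)`. The CN
inequality passes to the limsup, so `f` is strongly convex along midpoints; being lower
semicontinuous, it attains its infimum at exactly one point `u`. If `x` is an orbit of `T`, taking
limsups in `2 * dist (x (n + 1)) (T u) ^ 2 ≤ dist (x (n + 1)) u ^ 2 + dist (x n) (T u) ^ 2` gives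
`2 * f (T u) ≤ f u + f (T u)`. Thus `T u` also minimizes `f`, whence `T u = u`.
-/

open Bornology Filter Function Set Topology

/-- Strong convexity along midpoints with modulus `c`, for a real function on a metric space; it
makes minimizers exist and be unique. As no geodesic structure is assumed, the midpoint is replaced
by some point `m`, which may depend on `f`. -/
def StronglyMidconvex {X : Type*} [PseudoMetricSpace X] (c : ℝ) (f : X → ℝ) : Prop :=
  ∀ y z, ∃ m, f m + c * dist y z ^ 2 ≤ (f y + f z) / 2

namespace StronglyMidconvex

variable {X : Type*} {c : ℝ} {f : X → ℝ}

theorem mul_dist_sq_le [PseudoMetricSpace X] (hf : StronglyMidconvex c f) {b : ℝ}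
    (hb : ∀ y, b ≤ f y) (y z : X) : c * dist y z ^ 2 ≤ (f y + f z) / 2 - b := by
  obtain ⟨m, hm⟩ := hf y z
  linarith [hb m]

theorem cauchySeq_of_tendsto [PseudoMetricSpace X] (hf : StronglyMidconvex c f) (hc : 0 < c)
    {b : ℝ} (hb : ∀ y, b ≤ f y) {y : ℕ → X} (hanti : Antitone (f ∘ y))
    (hlim : Tendsto (f ∘ y) atTop (𝓝 b)) : CauchySeq y := by
  refine cauchySeq_of_le_tendsto_0' (fun k ↦ √((f (y k) - b) / c)) (fun k l hkl ↦ ?_) ?_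
  · have hle : f (y l) ≤ f (y k) := hanti hkl
    refine Real.le_sqrt_of_sq_le ((le_div_iff₀' hc).2 ?_)
    linarith [hf.mul_dist_sq_le hb (y k) (y l)]
  · simpa using ((hlim.sub_const b).div_const c).sqrt

theorem exists_forall_le [PseudoMetricSpace X] [CompleteSpace X] [Nonempty X]
    (hf : StronglyMidconvex c f) (hc : 0 < c) (hlsc : LowerSemicontinuous f)
    (hbdd : BddBelow (range f)) : ∃ u, ∀ y, f u ≤ f y := by
  obtain ⟨v, hanti, hlim, hv⟩ := exists_seq_tendsto_sInf (range_nonempty f) hbdd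
  choose y hy using hv
  obtain rfl : f ∘ y = v := funext hy
  have hinf : ∀ z, sInf (range f) ≤ f z := fun z ↦ csInf_le hbdd (mem_range_self z)
  obtain ⟨u, hu⟩ := cauchySeq_tendsto_of_complete (hf.cauchySeq_of_tendsto hc hinf hanti hlim)
  have hfu : f u ≤ sInf (range f) := le_of_forall_lt_imp_le_of_dense fun a ha ↦
    ge_of_tendsto hlim ((hu.eventually (hlsc u a ha)).mono fun _ ↦ le_of_lt)
  exact ⟨u, fun z ↦ hfu.trans (hinf z)⟩

theorem eq_of_forall_le [MetricSpace X] (hf : StronglyMidconvex c f) (hc : 0 < c) {u v : X}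
    (hu : ∀ y, f u ≤ f y) (hvu : f v ≤ f u) : v = u := by
  have hdist : c * dist v u ^ 2 ≤ 0 := by linarith [hf.mul_dist_sq_le hu v u]
  have hsq : dist v u ^ 2 = 0 :=
    le_antisymm (nonpos_of_mul_nonpos_right hdist hc) (sq_nonneg _)
  exact dist_eq_zero.1 (pow_eq_zero_iff two_ne_zero |>.1 hsq)

end StronglyMidconvex

/-- The CN inequality of Bruhat and Tits (semiparallelogram law). The complete metric spaces
satisfying it are the Hadamard spaces; completeness is kept as a separate assumption. -/
class CNSpace (X : Type*) [PseudoMetricSpace X] : Prop where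
  exists_midpoint : ∀ y z : X, ∃ m, ∀ x,
    dist x m ^ 2 + dist y z ^ 2 / 4 ≤ (dist x y ^ 2 + dist x z ^ 2) / 2

theorem cnSpace_of_convex {E : Type*} [NormedAddCommGroup E] [InnerProductSpace ℝ E] {C : Set E}
    (hC : Convex ℝ C) : CNSpace C where
  exists_midpoint y z := by
    refine ⟨⟨midpoint ℝ y z, hC.midpoint_mem y.2 z.2⟩, fun x ↦ ?_⟩
    simp only [Subtype.dist_eq]
    linarith [EuclideanGeometry.dist_sq_add_dist_sq_eq_two_mul_dist_midpoint_sq_add_half_dist_sq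
      (x : E) y z]

/-- The square of the asymptotic radius of the family `x` about the point `y`. Its minimizers are
the asymptotic centers of `x`. It is only meaningful when `x` is bounded, as the `limsup` is taken
in `ℝ`. -/
noncomputable def asymptoticRadiusSq {X ι : Type*} [PseudoMetricSpace X] (l : Filter ι)
    (x : ι → X) (y : X) : ℝ :=
  limsup (fun i ↦ dist (x i) y ^ 2) l

section AsymptoticRadius

variable {X ι : Type*} [PseudoMetricSpace X] {l : Filter ι} [l.NeBot] {x : ι → X}

theorem asymptoticRadiusSq_le_iff (hx : IsBounded (range x)) {y : X} {a : ℝ} :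
    asymptoticRadiusSq l x y ≤ a ↔ ∀ b > a, ∀ᶠ i in l, dist (x i) y ^ 2 < b := by
  obtain ⟨R, hR⟩ := hx.subset_closedBall y
  have hbdd : ∀ i, dist (x i) y ^ 2 ≤ R ^ 2 := fun i ↦
    pow_le_pow_left₀ dist_nonneg (hR (mem_range_self i)) 2
  exact limsup_le_iff (isCoboundedUnder_le_of_le l fun _ ↦ sq_nonneg _)
    (isBoundedUnder_of ⟨_, hbdd⟩)

theorem eventually_dist_sq_lt_asymptoticRadiusSq_add (hx : IsBounded (range x)) (y : X) {ε : ℝ}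
    (hε : 0 < ε) : ∀ᶠ i in l, dist (x i) y ^ 2 < asymptoticRadiusSq l x y + ε :=
  (asymptoticRadiusSq_le_iff hx).1 le_rfl _ (lt_add_of_pos_right _ hε)

theorem asymptoticRadiusSq_nonneg (hx : IsBounded (range x)) (y : X) :
    0 ≤ asymptoticRadiusSq l x y := by
  refine le_of_forall_pos_le_add fun ε hε ↦ ?_
  obtain ⟨i, hi⟩ := (eventually_dist_sq_lt_asymptoticRadiusSq_add (l := l) hx y hε).exists
  exact (sq_nonneg _).trans hi.le

theorem lowerSemicontinuous_asymptoticRadiusSq (hx : IsBounded (range x)) :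
    LowerSemicontinuous (asymptoticRadiusSq l x) := by
  intro u a ha
  obtain ⟨R, hR⟩ := hx.subset_closedBall u
  have hle : ∀ y, asymptoticRadiusSq l x u - dist y u * (2 * R + dist y u) ≤
      asymptoticRadiusSq l x y := by
    refine fun y ↦ sub_le_iff_le_add.2 ((asymptoticRadiusSq_le_iff hx).2 fun b hb ↦ ?_)
    obtain ⟨ε, hε, rfl⟩ := exists_pos_add_of_lt' hb
    filter_upwards [eventually_dist_sq_lt_asymptoticRadiusSq_add hx y hε] with i hi
    have hdiff : dist (x i) u - dist (x i) y ≤ dist y u := by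
      linarith [dist_triangle (x i) y u]
    have hsum : dist (x i) u + dist (x i) y ≤ 2 * R + dist y u := by
      have hiR : dist (x i) u ≤ R := hR (mem_range_self i)
      linarith [dist_triangle_right (x i) y u]
    calc dist (x i) u ^ 2
        = dist (x i) y ^ 2 +
            (dist (x i) u - dist (x i) y) * (dist (x i) u + dist (x i) y) := by ring
      _ ≤ dist (x i) y ^ 2 + dist y u * (2 * R + dist y u) := by gcongr
      _ < asymptoticRadiusSq l x y + dist y u * (2 * R + dist y u) + ε := by linarith
  have hcont : Continuous fun y ↦
      asymptoticRadiusSq l x u - dist y u * (2 * R + dist y u) := by fun_prop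
  exact (hcont.continuousAt.eventually (lt_mem_nhds (by simpa using ha))).mono
    fun y hy ↦ hy.trans_le (hle y)

theorem stronglyMidconvex_asymptoticRadiusSq [CNSpace X] (hx : IsBounded (range x)) :
    StronglyMidconvex (1 / 4) (asymptoticRadiusSq l x) := by
  intro y z
  obtain ⟨m, hm⟩ := CNSpace.exists_midpoint y z
  refine ⟨m, le_sub_iff_add_le.1 ((asymptoticRadiusSq_le_iff hx).2 fun b hb ↦ ?_)⟩
  obtain ⟨ε, hε, rfl⟩ := exists_pos_add_of_lt' hb
  filter_upwards [eventually_dist_sq_lt_asymptoticRadiusSq_add hx y hε,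
    eventually_dist_sq_lt_asymptoticRadiusSq_add hx z hε] with i hy hz
  linarith [hm (x i)]

end AsymptoticRadius

/-- Metrically nonspreading self-mappings; in a Hilbert space these are the nonspreading mappings
of Kohsaka and Takahashi. -/
def MetricallyNonspreading {X : Type*} [PseudoMetricSpace X] (T : X → X) : Prop :=
  ∀ x y, 2 * dist (T x) (T y) ^ 2 ≤ dist (T x) y ^ 2 + dist (T y) x ^ 2

theorem MetricallyNonspreading.asymptoticRadiusSq_orbit_map_le {X : Type*} [PseudoMetricSpace X]
    {T : X → X} (hT : MetricallyNonspreading T) {x : X}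
    (hx : IsBounded (range fun n ↦ T^[n] x)) (u : X) :
    asymptoticRadiusSq atTop (fun n ↦ T^[n] x) (T u) ≤
      asymptoticRadiusSq atTop (fun n ↦ T^[n] x) u := by
  set r := asymptoticRadiusSq atTop fun n ↦ T^[n] x
  suffices hmean : r (T u) ≤ (r u + r (T u)) / 2 by linarith
  refine (asymptoticRadiusSq_le_iff hx).2 fun b hb ↦ ?_
  obtain ⟨ε, hε, rfl⟩ := exists_pos_add_of_lt' hb
  have hu : ∀ᶠ n in atTop, dist (T^[n + 1] x) u ^ 2 < r u + ε :=
    (tendsto_add_atTop_nat 1).eventually (eventually_dist_sq_lt_asymptoticRadiusSq_add hx u hε)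
  have hTu : ∀ᶠ n in atTop, dist (T^[n] x) (T u) ^ 2 < r (T u) + ε :=
    eventually_dist_sq_lt_asymptoticRadiusSq_add hx (T u) hε
  rw [← map_add_atTop_eq_nat 1, eventually_map]
  filter_upwards [hu, hTu] with n hun hTun
  have hstep := hT (T^[n] x) u
  rw [← iterate_succ_apply' T, dist_comm (T u)] at hstep
  linarith

theorem stmt_6_general {X : Type*} [MetricSpace X] [CompleteSpace X] [CNSpace X] {T : X → X}
    (hT : MetricallyNonspreading T) :
    (∃ u, T u = u) ↔ ∃ x, IsBounded (range fun n : ℕ ↦ T^[n] x) := by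
  constructor
  · rintro ⟨u, hu⟩
    refine ⟨u, ?_⟩
    simp only [iterate_fixed hu, range_const, isBounded_singleton]
  · rintro ⟨x, hx⟩
    have : Nonempty X := ⟨x⟩
    have hconv := stronglyMidconvex_asymptoticRadiusSq (l := atTop) hx
    obtain ⟨u, hu⟩ := hconv.exists_forall_le (by norm_num)
      (lowerSemicontinuous_asymptoticRadiusSq hx)
      ⟨0, forall_mem_range.2 (asymptoticRadiusSq_nonneg hx)⟩
    exact ⟨u, hconv.eq_of_forall_le (by norm_num) hu (hT.asymptoticRadiusSq_orbit_map_le hx u)⟩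

/-- A metrically nonspreading self-mapping of a nonempty closed convex subset of a real
Hilbert space has a fixed point if and only if some orbit `{Tⁿx}` is bounded. -/
theorem stmt_6 {H : Type*} [NormedAddCommGroup H] [InnerProductSpace ℝ H]
    [CompleteSpace H] (C : Set H) (hC : C.Nonempty) (hCc : IsClosed C) (hCv : Convex ℝ C)
    (T : C → C)
    (hT : ∀ x y : C, 2 * dist (T x) (T y) ^ 2 ≤ dist (T x) y ^ 2 + dist (T y) x ^ 2) :
    (∃ u : C, T u = u) ↔
      ∃ x : C, Bornology.IsBounded (Set.range fun n : ℕ => (T^[n] x : H)) := by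
  have := hCc.completeSpace_coe
  have := cnSpace_of_convex hCv
  simpa only [← isBounded_image_subtype_val, ← range_comp] using! stmt_6_general hT
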